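/- Let E := ℓ²(ℕ; ℝ). There exist a subset G ⊆ E × E, a map F : E → E, and points s0, s̄ ∈ E such that: (a) G is monotone, i.e., ⟪x − y, u − v⟫ ≥ 0 for all (x,u), (y,v) ∈ G; (b) G is maximally monotone, i.e., every monotone subset of E × E containing G equals G; (c) the domain {x ∈ E : ∃ u, (x,u) ∈ G} is a bounded set; (d) F is the resolvent of G, i.e., for all x, y ∈ E, y = F x if and only if (y, x − y) ∈ G; (e) (s̄, 0) ∈ G (so s̄ is a zero of G); and (f) the iterates F^[k](s0) converge weakly to s̄ (⟪F^[k](s0), v⟫ → ⟪s̄, v⟫ for every v ∈ E) but do not converge to s̄ in norm. -/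

import Mathlib

open scoped RealInnerProductSpace

namespace GenLin

noncomputable def A (k n : ℕ) : ℝ :=
  Real.sqrt (n + 1) * (4 * (k + 1) / (k + 2) ^ 2) * ((k : ℝ) / (k + 2)) ^ n

noncomputable def B (k n : ℕ) : ℝ :=
  Real.sqrt 8 / (k + 2) * ((k : ℝ) / (k + 2)) ^ n

noncomputable def z (k m : ℕ) : ℝ := if m % 2 = 0 then A k (m / 2) else B k (m / 2)

noncomputable def K (t s : ℝ) : ℝ := 4 * t * s / (t + s) ^ 2 + 4 / (t + s)

lemma ratio_lt (j k : ℕ) : ‖((j : ℝ) / (j + 2)) * ((k : ℝ) / (k + 2))‖ < 1 := by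
  have h1 : (0 : ℝ) ≤ (j : ℝ) / (j + 2) := by positivity
  have h2 : (0 : ℝ) ≤ (k : ℝ) / (k + 2) := by positivity
  have h3 : (j : ℝ) / (j + 2) < 1 := by rw [div_lt_one (by positivity)]; linarith
  have h4 : (k : ℝ) / (k + 2) < 1 := by rw [div_lt_one (by positivity)]; linarith
  rw [Real.norm_of_nonneg (mul_nonneg h1 h2)]
  nlinarith

lemma one_sub_ratio (j k : ℕ) : 1 - ((j : ℝ) / (j + 2)) * ((k : ℝ) / (k + 2)) =
    2 * (j + k + 2) / ((j + 2) * (k + 2)) := by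
  have : (j : ℝ) + 2 ≠ 0 := by positivity
  have : (k : ℝ) + 2 ≠ 0 := by positivity
  field_simp
  ring

lemma hasSum_A (j k : ℕ) : HasSum (fun n => A j n * A k n)
    (4 * (j + 1) * (k + 1) / ((j + 1 : ℝ) + (k + 1)) ^ 2) := by
  have h := (hasSum_choose_mul_geometric_of_norm_lt_one 1 (ratio_lt j k)).mul_left
    ((4 * ((j : ℝ) + 1) / (j + 2) ^ 2) * (4 * ((k : ℝ) + 1) / (k + 2) ^ 2))
  rw [one_sub_ratio] at h
  refine Eq.mp (congrArg₂ (fun f v => HasSum f v) (funext fun n => ?_) ?_) h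
  · symm
    have : Real.sqrt ((n : ℝ) + 1) * Real.sqrt ((n : ℝ) + 1) = n + 1 :=
      Real.mul_self_sqrt (by positivity)
    simp only [A, Nat.choose_one_right, mul_pow]
    push_cast
    linear_combination (4 * ((j : ℝ) + 1) / (j + 2) ^ 2) * (4 * ((k : ℝ) + 1) / (k + 2) ^ 2) *
      (((j : ℝ) / (j + 2)) ^ n * ((k : ℝ) / (k + 2)) ^ n) * this
  · symm
    have : (j : ℝ) + 2 ≠ 0 := by positivity
    have : (k : ℝ) + 2 ≠ 0 := by positivity
    have : (j : ℝ) + k + 2 ≠ 0 := by positivity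
    have : (j + 1 : ℝ) + (k + 1) ≠ 0 := by positivity
    rw [show (j + 1 : ℝ) + (k + 1) = j + k + 2 by ring]
    simp only [zero_add, Nat.reduceAdd, pow_one, div_pow, mul_pow]
    field_simp
    norm_num

lemma hasSum_B (j k : ℕ) : HasSum (fun n => B j n * B k n)
    (4 / ((j + 1 : ℝ) + (k + 1))) := by
  have h := (hasSum_choose_mul_geometric_of_norm_lt_one 0 (ratio_lt j k)).mul_left
    (8 / (((j : ℝ) + 2) * (k + 2)))
  rw [one_sub_ratio] at h
  refine Eq.mp (congrArg₂ (fun f v => HasSum f v) (funext fun n => ?_) ?_) h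
  · symm
    have : Real.sqrt 8 * Real.sqrt 8 = 8 := Real.mul_self_sqrt (by positivity)
    simp only [B, Nat.choose_zero_right, mul_pow]
    push_cast
    rw [div_mul_eq_div_div]
    linear_combination (1 / ((j : ℝ) + 2)) * (1 / ((k : ℝ) + 2)) *
      (((j : ℝ) / (j + 2)) ^ n * ((k : ℝ) / (k + 2)) ^ n) * this
  · symm
    have : (j : ℝ) + 2 ≠ 0 := by positivity
    have : (k : ℝ) + 2 ≠ 0 := by positivity
    have : (j : ℝ) + k + 2 ≠ 0 := by positivity
    rw [show (j + 1 : ℝ) + (k + 1) = j + k + 2 by ring]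
    simp only [zero_add, Nat.reduceAdd, pow_one, div_pow, mul_pow]
    field_simp
    norm_num

lemma hasSum_z (j k : ℕ) : HasSum (fun n => z j n * z k n) (K (j + 1) (k + 1)) := by
  refine HasSum.even_add_odd (f := fun n => z j n * z k n) ?_ ?_
  · convert hasSum_A j k using 2 with n
    simp [z]
  · convert hasSum_B j k using 2 with n
    have h1 : (2 * n + 1) % 2 = 1 := by omega
    have h2 : (2 * n + 1) / 2 = n := by omega
    simp [z, h1, h2]

lemma memz (k : ℕ) : Memℓp (E := fun _ : ℕ => ℝ) (z k) 2 := by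
  apply memℓp_gen
  convert (hasSum_z k k).summable using 2 with n
  simp [pow_two]

noncomputable def x (k : ℕ) : lp (fun _ : ℕ => ℝ) 2 := ⟨z k, memz k⟩

lemma inner_x (j k : ℕ) : ⟪x j, x k⟫ = K (j + 1) (k + 1) := by
  have h := lp.hasSum_inner (𝕜 := ℝ) (x j) (x k)
  refine h.unique ?_
  have e : (fun i => ⟪x j i, x k i⟫) = fun n => z j n * z k n := by
    ext n
    simp [x, mul_comm]
  rw [e]
  exact hasSum_z j k

lemma key_h (y m : ℝ) (hy : 1 ≤ y) (hm : 0 ≤ m) :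
    0 ≤ (4 / (y * (y + 1)) - 1 / y ^ 2)
      + (4 / ((y + 2 * m) * (y + 2 * m + 1)) - 1 / (y + 2 * m) ^ 2)
      - 2 * (4 / ((y + m) * (y + m + 1)) - 1 / (y + m) ^ 2) := by
  obtain ⟨p, hp, rfl⟩ : ∃ p : ℝ, 0 ≤ p ∧ y = 1 + p := ⟨y - 1, by linarith, by ring⟩
  rw [div_sub_div _ _ (by positivity) (by positivity), div_sub_div _ _ (by positivity) (by positivity),
    div_sub_div _ _ (by positivity) (by positivity), div_add_div _ _ (by positivity) (by positivity),
    mul_div_assoc', div_sub_div _ _ (by positivity) (by positivity)]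
  apply div_nonneg _ (by positivity)
  ring_nf
  positivity

lemma key (t m : ℝ) (ht : 1 ≤ t) (hm : 0 ≤ m) :
    K (t + 1) (t + 1) + K (t + m + 1) (t + m + 1) - 2 * K (t + m + 1) (t + 1)
      ≤ K (t + m + 1) (t + m) + K (t + 1) t - K (t + m + 1) t - K (t + 1) (t + m) := by
  have h := key_h (2 * t + 1) m (by linarith) hm
  have h2 : 0 ≤ 2 * m ^ 2 * (1 / (2 * t + 1 + m) ^ 2 - 1 / (2 * t + m + 2) ^ 2) := by
    apply mul_nonneg (by positivity)
    rw [sub_nonneg]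
    apply one_div_le_one_div_of_le (by positivity)
    gcongr ?_ ^ 2
    linarith
  have e : ∀ a b : ℝ, 0 < a + b → K a b = 1 - (a - b) ^ 2 * (1 / (a + b) ^ 2) + 4 * (1 / (a + b)) := by
    intro a b hab
    unfold K
    field_simp
    ring
  have e2 : ∀ y : ℝ, 1 ≤ y → 4 / (y * (y + 1)) = 4 * (1 / y) - 4 * (1 / (y + 1)) := by
    intro y hy
    have : y ≠ 0 := by linarith
    have : y + 1 ≠ 0 := by linarith
    field_simp
    ring
  rw [e2 _ (by linarith), e2 _ (by linarith), e2 _ (by linarith)] at h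
  simp only [e _ _ (show 0 < t + 1 + (t + 1) by linarith),
    e _ _ (show 0 < t + m + 1 + (t + m + 1) by linarith),
    e _ _ (show 0 < t + m + 1 + (t + 1) by linarith),
    e _ _ (show 0 < t + m + 1 + (t + m) by linarith),
    e _ _ (show 0 < t + 1 + t by linarith),
    e _ _ (show 0 < t + m + 1 + t by linarith),
    e _ _ (show 0 < t + 1 + (t + m) by linarith)]
  ring_nf at h h2 ⊢
  linarith

lemma key0 (t : ℝ) (ht : 1 ≤ t) : K (t + 1) (t + 1) ≤ K (t + 1) t := by
  unfold K
  rw [← sub_nonneg]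
  have : 4 * (t + 1) * t / (t + 1 + t) ^ 2 + 4 / (t + 1 + t) - (4 * (t + 1) * (t + 1) / (t + 1 + (t + 1)) ^ 2 + 4 / (t + 1 + (t + 1))) = (3 * t + 1) / ((t + 1) * (2 * t + 1) ^ 2) := by
    rw [show t + 1 + t = 2 * t + 1 by ring, show t + 1 + (t + 1) = 2 * (t + 1) by ring]
    have : 2 * t + 1 ≠ 0 := by linarith
    have : t + 1 ≠ 0 := by linarith
    field_simp
    ring
  rw [this]
  positivity

lemma mono_le (j m : ℕ) :
    (0 : ℝ) ≤ ⟪x (j + m + 1) - x (j + 1), (x (j + m) - x (j + m + 1)) - (x j - x (j + 1))⟫ := by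
  have h := key (j + 1) m (by linarith [(Nat.cast_nonneg j : (0 : ℝ) ≤ j)]) (Nat.cast_nonneg m)
  simp only [inner_sub_left, inner_sub_right, inner_x]
  have e : ∀ a b, K a b = K b a := fun a b => by unfold K; ring_nf
  push_cast
  rw [e (j + 1 + 1) (j + m + 1 + 1)]
  ring_nf at h ⊢
  linarith

lemma mono_x (j k : ℕ) :
    (0 : ℝ) ≤ ⟪x (k + 1) - x (j + 1), (x k - x (k + 1)) - (x j - x (j + 1))⟫ := by
  rcases le_total j k with h | h
  · obtain ⟨m, rfl⟩ := Nat.exists_eq_add_of_le h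
    exact mono_le j m
  · obtain ⟨m, rfl⟩ := Nat.exists_eq_add_of_le h
    have := mono_le k m
    rw [← neg_sub, ← neg_sub (x k - x (k + 1)), inner_neg_neg] at this
    exact this

lemma mono_0 (k : ℕ) : (0 : ℝ) ≤ ⟪x (k + 1), x k - x (k + 1)⟫ := by
  have h := key0 (k + 1) (by linarith [(Nat.cast_nonneg k : (0 : ℝ) ≤ k)])
  simp only [inner_sub_right, inner_x]
  push_cast
  linarith

lemma norm_sq_x (k : ℕ) : ‖x k‖ ^ 2 = 1 + 2 / (k + 1) := by
  rw [← real_inner_self_eq_norm_sq, inner_x]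
  unfold K
  have : (k : ℝ) + 1 ≠ 0 := by positivity
  field_simp
  ring

lemma norm_x_le (k : ℕ) : ‖x k‖ ≤ 2 := by
  have h := norm_sq_x k
  have : (2 : ℝ) / (k + 1) ≤ 2 := by
    rw [div_le_iff₀ (by positivity)]; linarith [(Nat.cast_nonneg k : (0 : ℝ) ≤ k)]
  nlinarith [norm_nonneg (x k)]

lemma one_le_norm_x (k : ℕ) : 1 ≤ ‖x k‖ := by
  have h := norm_sq_x k
  have : (0 : ℝ) ≤ 2 / (k + 1) := by positivity
  nlinarith [norm_nonneg (x k)]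

lemma ratio_pow_le (k n : ℕ) : ((k : ℝ) / (k + 2)) ^ n ≤ 1 := by
  apply pow_le_one₀ (by positivity)
  rw [div_le_one (by positivity)]; linarith

lemma tendsto_z (n : ℕ) : Filter.Tendsto (fun k => z k n) Filter.atTop (nhds 0) := by
  have hk : Filter.Tendsto (fun k : ℕ => 1 / ((k : ℝ) + 1)) Filter.atTop (nhds 0) :=
    tendsto_one_div_add_atTop_nhds_zero_nat
  have h : ∀ k, 0 ≤ z k n ∧ z k n ≤ (Real.sqrt ((n / 2 : ℕ) + 1) * 4 + Real.sqrt 8) * (1 / ((k : ℝ) + 1)) := by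
    intro k
    have hr := ratio_pow_le k (n / 2)
    have e1 : (4 * ((k : ℝ) + 1) / (k + 2) ^ 2) ≤ 4 * (1 / ((k : ℝ) + 1)) := by
      rw [mul_one_div, div_le_div_iff₀ (by positivity) (by positivity)]
      nlinarith [(Nat.cast_nonneg k : (0 : ℝ) ≤ k)]
    have e2 : Real.sqrt 8 / ((k : ℝ) + 2) ≤ Real.sqrt 8 * (1 / ((k : ℝ) + 1)) := by
      rw [mul_one_div]
      gcongr
      linarith
    unfold z
    split_ifs
    · refine ⟨by unfold A; positivity, ?_⟩
      calc A k (n / 2) ≤ Real.sqrt ((n / 2 : ℕ) + 1) * (4 * (1 / ((k : ℝ) + 1))) * 1 := by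
            unfold A; gcongr
        _ ≤ _ := by
          have : 0 ≤ Real.sqrt 8 * (1 / ((k : ℝ) + 1)) := by positivity
          linarith
    · refine ⟨by unfold B; positivity, ?_⟩
      calc B k (n / 2) ≤ (Real.sqrt 8 * (1 / ((k : ℝ) + 1))) * 1 := by
            unfold B; gcongr
        _ ≤ _ := by
          have : 0 ≤ Real.sqrt ((n / 2 : ℕ) + 1) * 4 * (1 / ((k : ℝ) + 1)) := by positivity
          linarith
  refine squeeze_zero (fun k => (h k).1) (fun k => (h k).2) ?_
  simpa using hk.const_mul (Real.sqrt ((n / 2 : ℕ) + 1) * 4 + Real.sqrt 8)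

lemma weak_x (v : lp (fun _ : ℕ => ℝ) 2) :
    Filter.Tendsto (fun k => ⟪x k, v⟫) Filter.atTop (nhds 0) := by
  classical
  have hs := lp.hasSum_single (p := 2) (by simp) v
  rw [Metric.tendsto_atTop]
  intro ε hε
  rw [HasSum, SummationFilter.unconditional_filter, Metric.tendsto_atTop] at hs
  obtain ⟨S, hS⟩ := hs (ε / 4) (by positivity)
  have hS := hS S le_rfl
  set w := ∑ i ∈ S, lp.single (E := fun _ : ℕ => ℝ) 2 i (v i) with hw
  have h1 : Filter.Tendsto (fun k => ⟪x k, w⟫) Filter.atTop (nhds 0) := by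
    have : ∀ k, ⟪x k, w⟫ = ∑ i ∈ S, z k i * v i := by
      intro k
      rw [hw, inner_sum]
      refine Finset.sum_congr rfl fun i _ => ?_
      rw [lp.inner_single_right]
      simp [x, mul_comm]
    simp only [this]
    have := tendsto_finsetSum S (fun i _ => (tendsto_z i).mul_const (v i))
    simpa using this
  rw [Metric.tendsto_atTop] at h1
  obtain ⟨N, hN⟩ := h1 (ε / 2) (by positivity)
  refine ⟨N, fun k hk => ?_⟩
  have h2 := hN k hk
  rw [dist_zero_right] at h2 ⊢
  rw [dist_eq_norm] at hS
  have h3 : ⟪x k, v⟫ = ⟪x k, w⟫ - ⟪x k, w - v⟫ := by rw [inner_sub_right]; ring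
  rw [h3]
  have h4 : ‖⟪x k, w - v⟫‖ ≤ 2 * ‖w - v‖ :=
    (norm_inner_le_norm _ _).trans (by gcongr; exact norm_x_le k)
  have := norm_sub_le ⟪x k, w⟫ ⟪x k, w - v⟫
  linarith

end GenLin

namespace GenLin

section
variable {E : Type*} [NormedAddCommGroup E] [InnerProductSpace ℝ E]

lemma convex_term (a b : E) : ConvexOn ℝ Set.univ (fun y : E => ⟪y - a, y - b⟫) := by
  refine ⟨convex_univ, ?_⟩
  intro u _ v _ s t hs ht hst
  have hs' : s = 1 - t := by linarith
  have h : 0 ≤ s * t * ⟪u - v, u - v⟫ := by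
    have := real_inner_self_nonneg (x := u - v)
    positivity
  have e : s * ⟪u - a, u - b⟫ + t * ⟪v - a, v - b⟫ -
      ⟪s • u + t • v - a, s • u + t • v - b⟫ = s * t * ⟪u - v, u - v⟫ := by
    subst hs'
    simp only [inner_sub_left, inner_sub_right, inner_add_left, inner_add_right,
      real_inner_smul_left, real_inner_smul_right, real_inner_comm v u]
    ring
  simp only [smul_eq_mul]
  linarith

lemma finite_DF {ι : Type*} [Fintype ι] [Nonempty ι] (a b : ι → E)
    (hab : ∀ i j, ⟪a i - a j, b i - b j⟫ ≤ 0) :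
    ∃ y ∈ convexHull ℝ (Set.range a), ∀ i, ⟪y - a i, y - b i⟫ ≤ 0 := by
  classical
  let f : E → (ι → ℝ) → ℝ := fun y μ => ∑ i, μ i * ⟪y - a i, y - b i⟫
  obtain ⟨y, hy, μ, hμ, hs⟩ := Sion.exists_isSaddlePointOn (X := convexHull ℝ (Set.range a))
    (Y := stdSimplex ℝ ι) (f := f) ((Set.range_nonempty a).convexHull) (convex_convexHull _ _)
    ((Set.finite_range a).isCompact_convexHull ℝ)
    (fun μ _ => by
      apply Continuous.lowerSemicontinuous (by fun_prop) |>.lowerSemicontinuousOn)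
    (fun μ hμ => by
      apply ConvexOn.quasiconvexOn
      refine ConvexOn.subset ?_ (Set.subset_univ _) (convex_convexHull _ _)
      refine ⟨convex_univ, ?_⟩
      intro u hu v hv s t hs ht hst
      simp only [f, smul_eq_mul, Finset.mul_sum]
      rw [← Finset.sum_add_distrib]
      refine Finset.sum_le_sum fun i _ => ?_
      have := (convex_term (a i) (b i)).2 hu hv hs ht hst
      simp only [smul_eq_mul] at this
      nlinarith [mul_le_mul_of_nonneg_left this (hμ.1 i)])
    (convex_stdSimplex ℝ ι) ⟨_, single_mem_stdSimplex ℝ (Classical.arbitrary ι)⟩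
    (isCompact_stdSimplex ℝ ι)
    (fun y _ => by
      apply Continuous.upperSemicontinuous (by fun_prop) |>.upperSemicontinuousOn)
    (fun y hy => by
      apply ConcaveOn.quasiconcaveOn
      refine ⟨convex_stdSimplex ℝ ι, ?_⟩
      intro u hu v hv s t hs ht hst
      apply le_of_eq
      simp only [f, smul_eq_mul, Finset.mul_sum]
      rw [← Finset.sum_add_distrib]
      refine Finset.sum_congr rfl fun i _ => ?_
      simp
      ring)
  refine ⟨y, hy, fun i => ?_⟩
  let w : E := ∑ i, μ i • a i
  have hw : w ∈ convexHull ℝ (Set.range a) :=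
    (convex_convexHull ℝ _).sum_mem (fun i _ => hμ.1 i) hμ.2
      (fun i _ => subset_convexHull ℝ _ (Set.mem_range_self i))
  have h1 := hs w hw _ (single_mem_stdSimplex ℝ i)
  have h2 : f y (Pi.single i 1) = ⟪y - a i, y - b i⟫ := by
    simp [f, Pi.single_apply]
  rw [h2] at h1
  refine h1.trans ?_
  have hsum := hμ.2
  -- f w μ = 1/2 Σ Σ
  let c : E := ∑ i, μ i • b i
  have e1 : f w μ = ∑ i, μ i * ⟪a i, b i⟫ - ⟪w, c⟫ := by
    have : ∀ i, μ i * ⟪w - a i, w - b i⟫ = μ i * ⟪w, w⟫ - ⟪w, μ i • b i⟫ - ⟪μ i • a i, w⟫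
        + μ i * ⟪a i, b i⟫ := by
      intro i
      simp only [inner_sub_left, inner_sub_right, real_inner_smul_left, real_inner_smul_right]
      ring
    simp only [f, this]
    rw [Finset.sum_add_distrib, Finset.sum_sub_distrib, Finset.sum_sub_distrib, ← inner_sum,
      ← sum_inner, ← Finset.sum_mul, hsum]
    change 1 * ⟪w, w⟫ - ⟪w, c⟫ - ⟪w, w⟫ + _ = _
    ring
  have e2 : ∑ i, ∑ j, μ i * μ j * ⟪a i - a j, b i - b j⟫ = 2 * f w μ := by
    have : ∀ i j, μ i * μ j * ⟪a i - a j, b i - b j⟫ =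
        μ j * (μ i * ⟪a i, b i⟫) - ⟪μ i • a i, μ j • b j⟫ - ⟪μ j • a j, μ i • b i⟫
          + μ i * (μ j * ⟪a j, b j⟫) := by
      intro i j
      simp only [inner_sub_left, inner_sub_right, real_inner_smul_left, real_inner_smul_right]
      ring
    simp only [this, Finset.sum_add_distrib, Finset.sum_sub_distrib, ← inner_sum, ← sum_inner,
      ← Finset.sum_mul, ← Finset.mul_sum, hsum]
    rw [e1]
    change 1 * _ - ⟪w, c⟫ - ⟪w, c⟫ + _ = _
    ring
  have e3 : ∑ i, ∑ j, μ i * μ j * ⟪a i - a j, b i - b j⟫ ≤ 0 :=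
    Finset.sum_nonpos fun i _ => Finset.sum_nonpos fun j _ =>
      mul_nonpos_of_nonneg_of_nonpos (mul_nonneg (hμ.1 i) (hμ.1 j)) (hab i j)
  linarith

lemma ball_iff (a b y : E) : ⟪y - a, y - b⟫ ≤ 0 ↔
    y ∈ Metric.closedBall ((1 / 2 : ℝ) • (a + b)) (‖(1 / 2 : ℝ) • (a - b)‖) := by
  rw [mem_closedBall_iff_norm, ← sq_le_sq₀ (norm_nonneg _) (norm_nonneg _),
    ← real_inner_self_eq_norm_sq, ← real_inner_self_eq_norm_sq]
  have : ⟪y - (1 / 2 : ℝ) • (a + b), y - (1 / 2 : ℝ) • (a + b)⟫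
    - ⟪(1 / 2 : ℝ) • (a - b), (1 / 2 : ℝ) • (a - b)⟫ = ⟪y - a, y - b⟫ := by
    simp only [inner_sub_left, inner_sub_right, inner_add_left, inner_add_right,
      real_inner_smul_left, real_inner_smul_right, real_inner_comm y a, real_inner_comm y b,
      real_inner_comm b a]
    ring
  rw [← this, sub_nonpos]

lemma balls_fip [CompleteSpace E] {ι : Type*} (c0 : E) (r0 : ℝ) (c : ι → E) (r : ι → ℝ)
    (h : ∀ u : Finset ι, ∃ y ∈ Metric.closedBall c0 r0, ∀ i ∈ u, y ∈ Metric.closedBall (c i) (r i)) :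
    ∃ y ∈ Metric.closedBall c0 r0, ∀ i, y ∈ Metric.closedBall (c i) (r i) := by
  let T := InnerProductSpace.toDual ℝ E
  have hd : ∀ y c r, T y ∈ Metric.closedBall (T c) r ↔ y ∈ Metric.closedBall c r := by
    intro y c r
    rw [Metric.mem_closedBall, Metric.mem_closedBall, T.dist_map]
  have := (WeakDual.isCompact_closedBall (𝕜 := ℝ) (T c0) r0).inter_iInter_nonempty
    (fun i => WeakDual.toStrongDual ⁻¹' Metric.closedBall (T (c i)) (r i))
    (fun i => WeakDual.isClosed_closedBall _ _) (by
      intro u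
      obtain ⟨y, hy, hyu⟩ := h u
      refine ⟨StrongDual.toWeakDual (T y), ?_, ?_⟩
      · exact (hd _ _ _).2 hy
      · simp only [Set.mem_iInter]
        intro i hi
        exact (hd _ _ _).2 (hyu i hi))
  obtain ⟨φ, h0, h1⟩ := this
  simp only [Set.mem_iInter] at h1
  obtain ⟨y, hy⟩ := T.surjective (WeakDual.toStrongDual φ)
  refine ⟨y, (hd _ _ _).1 ?_, fun i => (hd _ _ _).1 ?_⟩
  · rw [hy]; exact h0
  · rw [hy]; exact h1 i

def Mono (G : Set (E × E)) : Prop := ∀ p ∈ G, ∀ q ∈ G, (0 : ℝ) ≤ ⟪p.1 - q.1, p.2 - q.2⟫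

lemma DF [CompleteSpace E] (G : Set (E × E)) (hG : Mono G) (R : ℝ) (hR : 0 ≤ R)
    (hdom : ∀ p ∈ G, ‖p.1‖ ≤ R) (x : E) :
    ∃ y : E, ‖y‖ ≤ R ∧ ∀ p ∈ G, (0 : ℝ) ≤ ⟪y - p.1, (x - y) - p.2⟫ := by
  obtain ⟨y, hy, h⟩ := balls_fip (ι := G) (0 : E) R
    (fun p => (1 / 2 : ℝ) • (p.1.1 + (x - p.1.2))) (fun p => ‖(1 / 2 : ℝ) • (p.1.1 - (x - p.1.2))‖) (by
      intro u
      rcases u.eq_empty_or_nonempty with rfl | hu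
      · exact ⟨0, by simpa using hR, by simp⟩
      have : Nonempty u := hu.to_subtype
      obtain ⟨y, hy, h⟩ := finite_DF (ι := u) (fun p => p.1.1.1) (fun p => x - p.1.1.2) (by
        intro i j
        have := hG _ i.1.2 _ j.1.2
        rw [sub_sub_sub_cancel_left, ← neg_sub i.1.1.2, inner_neg_right]
        linarith)
      refine ⟨y, ?_, fun i hi => (ball_iff _ _ _).1 (h ⟨i, hi⟩)⟩
      refine convexHull_min ?_ (convex_closedBall (0 : E) R) hy
      rintro _ ⟨i, rfl⟩
      simpa using hdom _ i.1.2)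
  refine ⟨y, by simpa using hy, fun p hp => ?_⟩
  have := (ball_iff _ _ _).2 (h ⟨p, hp⟩)
  have e : (x - y) - p.2 = -(y - (x - p.2)) := by abel
  rw [e, inner_neg_right]
  simpa using this

lemma exists_ext [CompleteSpace E] (G₀ : Set (E × E)) (hG : Mono G₀) (R : ℝ) (hR : 0 ≤ R)
    (hdom : ∀ p ∈ G₀, ‖p.1‖ ≤ R) :
    ∃ (G : Set (E × E)) (F : E → E), G₀ ⊆ G ∧ Mono G ∧ (∀ p ∈ G, ‖p.1‖ ≤ R) ∧
      (∀ G' : Set (E × E), Mono G' → G ⊆ G' → G' = G) ∧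
      ∀ x y, y = F x ↔ (y, x - y) ∈ G := by
  obtain ⟨G, h0, hmax⟩ := zorn_subset_nonempty {G : Set (E × E) | Mono G ∧ ∀ p ∈ G, ‖p.1‖ ≤ R}
    (by
      intro c hc hch hne
      refine ⟨⋃₀ c, ⟨?_, ?_⟩, fun s hs => Set.subset_sUnion_of_mem hs⟩
      · rintro p ⟨s, hs, hp⟩ q ⟨t, ht, hq⟩
        rcases hch.total hs ht with h | h
        · exact (hc ht).1 p (h hp) q hq
        · exact (hc hs).1 p hp q (h hq)
      · rintro p ⟨s, hs, hp⟩
        exact (hc hs).2 p hp) G₀ ⟨hG, hdom⟩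
  obtain ⟨hm, hb⟩ := hmax.prop
  have hsurj : ∀ x, ∃ y, (y, x - y) ∈ G := by
    intro x
    obtain ⟨y, hy, h⟩ := DF G hm R hR hb x
    refine ⟨y, ?_⟩
    have hin : insert (y, x - y) G ∈ {G : Set (E × E) | Mono G ∧ ∀ p ∈ G, ‖p.1‖ ≤ R} := by
      refine ⟨?_, ?_⟩
      · rintro p (rfl | hp) q (rfl | hq)
        · simp
        · exact h q hq
        · have := h p hp
          rw [← neg_sub, ← neg_sub p.2, inner_neg_neg] at this
          exact this
        · exact hm p hp q hq
      · rintro p (rfl | hp)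
        · exact hy
        · exact hb p hp
    exact hmax.le_of_ge hin (Set.subset_insert _ _) (Set.mem_insert _ _)
  have huniq : ∀ G' : Set (E × E), Mono G' → ∀ x y y', (y, x - y) ∈ G' → (y', x - y') ∈ G' →
      y = y' := by
    intro G' hm' x y y' h h'
    have := hm' _ h _ h'
    simp only at this
    rw [sub_sub_sub_cancel_left, ← neg_sub y y', inner_neg_right] at this
    have h3 : ⟪y - y', y - y'⟫ ≤ (0 : ℝ) := by linarith
    rw [real_inner_self_eq_norm_sq] at h3
    exact sub_eq_zero.1 (norm_eq_zero.1 (pow_eq_zero_iff (two_ne_zero) |>.1 (le_antisymm h3 (sq_nonneg _))))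
  choose F hF using hsurj
  refine ⟨G, F, h0, hm, hb, ?_, ?_⟩
  · intro G' hm' hsub
    refine Set.Subset.antisymm ?_ hsub
    rintro ⟨y, u⟩ hp
    have h1 := hF (y + u)
    have h2 : y = F (y + u) := huniq G' hm' (y + u) _ _ (by simpa using hp) (hsub h1)
    rw [← h2] at h1
    simpa using h1
  · intro x y
    constructor
    · rintro rfl; exact hF x
    · intro h; exact huniq G hm x _ _ h (hF x)

end

end GenLin

/-- Genel–Lindenstrauss repackaged: in `ℓ²(ℕ; ℝ)` there exist a maximally monotone operator
`G` with bounded domain, its resolvent `F`, and a starting point `s0` such that the iterates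
`F^[k] s0` converge weakly, but not in norm, to a zero `s̄` of `G`. -/
theorem stmt_11 :
    ∃ (G : Set (lp (fun _ : ℕ => ℝ) 2 × lp (fun _ : ℕ => ℝ) 2))
      (F : lp (fun _ : ℕ => ℝ) 2 → lp (fun _ : ℕ => ℝ) 2)
      (s0 sbar : lp (fun _ : ℕ => ℝ) 2),
      (∀ p ∈ G, ∀ q ∈ G, (0 : ℝ) ≤ ⟪p.1 - q.1, p.2 - q.2⟫) ∧
      (∀ G' : Set (lp (fun _ : ℕ => ℝ) 2 × lp (fun _ : ℕ => ℝ) 2),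
        (∀ p ∈ G', ∀ q ∈ G', (0 : ℝ) ≤ ⟪p.1 - q.1, p.2 - q.2⟫) → G ⊆ G' → G' = G) ∧
      Bornology.IsBounded {x : lp (fun _ : ℕ => ℝ) 2 | ∃ u, (x, u) ∈ G} ∧
      (∀ x y : lp (fun _ : ℕ => ℝ) 2, y = F x ↔ (y, x - y) ∈ G) ∧
      (sbar, (0 : lp (fun _ : ℕ => ℝ) 2)) ∈ G ∧
      (∀ v : lp (fun _ : ℕ => ℝ) 2,
        Filter.Tendsto (fun k => ⟪F^[k] s0, v⟫) Filter.atTop (nhds ⟪sbar, v⟫)) ∧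
      ¬ Filter.Tendsto (fun k => F^[k] s0) Filter.atTop (nhds sbar) := by
  classical
  let G₀ : Set (lp (fun _ : ℕ => ℝ) 2 × lp (fun _ : ℕ => ℝ) 2) :=
    insert (0, 0) (Set.range fun k => (GenLin.x (k + 1), GenLin.x k - GenLin.x (k + 1)))
  have hG₀ : GenLin.Mono G₀ := by
    rintro p (rfl | ⟨k, rfl⟩) q (rfl | ⟨j, rfl⟩)
    · simp
    · have := GenLin.mono_0 j
      simp only [zero_sub, inner_neg_neg]
      exact this
    · have := GenLin.mono_0 k
      simp only [sub_zero]
      exact this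
    · exact GenLin.mono_x j k
  have hdom : ∀ p ∈ G₀, ‖p.1‖ ≤ 2 := by
    rintro p (rfl | ⟨k, rfl⟩)
    · simp
    · exact GenLin.norm_x_le _
  obtain ⟨G, F, hsub, hm, hb, hmax, hF⟩ := GenLin.exists_ext G₀ hG₀ 2 (by norm_num) hdom
  have hit : ∀ k, F^[k] (GenLin.x 0) = GenLin.x k := by
    intro k
    induction k with
    | zero => rfl
    | succ k ih =>
      rw [Function.iterate_succ_apply', ih]
      exact ((hF _ _).2 (hsub (Set.mem_insert_of_mem _ ⟨k, rfl⟩))).symm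
  refine ⟨G, F, GenLin.x 0, 0, hm, hmax, ?_, hF, hsub (Set.mem_insert _ _), ?_, ?_⟩
  · refine (Metric.isBounded_closedBall (x := (0 : lp (fun _ : ℕ => ℝ) 2)) (r := 2)).subset ?_
    rintro y ⟨u, hu⟩
    simpa using hb _ hu
  · intro v
    simp only [hit, inner_zero_left]
    exact GenLin.weak_x v
  · intro h
    simp only [hit] at h
    have h1 := h.norm
    rw [norm_zero] at h1
    have := ge_of_tendsto' h1 GenLin.one_le_norm_x
    linarith
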